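/- Let p > 3 be a prime, let k be a field of characteristic p, and let d ≥ 2. Then dim_k( k[x_0,…,x_d]/(x_0^p,…,x_d^p, x_0² + ⋯ + x_{d−1}² + x_d³) ) + p^{d−1} ≥ dim_k( k[x_0,…,x_d]/(x_0^p,…,x_d^p, x_0² + x_1² + ⋯ + x_d²) ) + dim_k( k[y_0,…,y_{d−1}]/(y_0^p,…,y_{d−1}^p, y_0² + ⋯ + y_{d−1}²) ). That is, HK_1(S_{p,d}) − HK_1(R_{p,d}) ≥ HK_1(R_{p,d−1}) − p^{d−1}. -/

import Mathlib

open MvPolynomial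

/-- The Hilbert–Kunz function of the hypersurface defined by `f` in `n` variables,
in characteristic `p`, at level `e`. -/
noncomputable def HKfun (k : Type*) [Field k] (n p e : ℕ)
    (f : MvPolynomial (Fin n) k) : ℕ :=
  Module.finrank k
    (MvPolynomial (Fin n) k ⧸
      Ideal.span
        (Set.range (fun i : Fin n => (X i : MvPolynomial (Fin n) k) ^ p ^ e) ∪ {f}))

/-!
Let `A = k[x] / (x ^ p)` be the truncated polynomial ring and `c` a positive integer. Sorting the
monomials `y ^ i` by the residue of `i` modulo `c` decomposes `A[y] / (y ^ p, f + y ^ c)` and gives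
`HK₁(f + y ^ c) = ∑_{j < c} dim A / (f ^ ⌊(p + j) / c⌋)`. The function `L a = dim A / (f ^ a)` is
concave, because `L (a + 1) - L a` is the dimension of the annihilator of `f` in `f ^ a A`. The
exponents `⌊(p + j) / c⌋` add up to `p` and are as equal as possible, so for `c ≥ 3` and
`p = 2m + 1` Jensen's inequality gives `HK₁(f + y ^ c) ≥ 2 L m + L 1`, whereas
`HK₁(f + y ^ 2) = L m + L (m + 1)`. It remains to see `L (m + 1) ≤ L m + p ^ n` when
`f = g + z ^ 2` with `g` in `n` variables. Splitting by the parity of the exponent of `z` reduces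
this to comparing the ideals `(z ^ (m + 1), (z + g) ^ (m + 1))` and `(z ^ m, (z + g) ^ m)` over the
truncated ring in `n` variables: a polynomial whose derivative lies in the second ideal lies in the
first one up to a constant, since all integrations involved divide only by integers below `p`.
-/

open Module Finset

section Concave

theorem sum_range_add_div (N : ℕ) {c : ℕ} (hc : 0 < c) : ∑ j ∈ range c, (N + j) / c = N := by
  induction N with
  | zero => exact sum_eq_zero fun j hj ↦ by simpa using Nat.div_eq_of_lt (mem_range.1 hj)
  | succ N ih =>
    have shift := (sum_range_succ' (fun j ↦ (N + j) / c) c).symm.trans (sum_range_succ _ c)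
    simp only [ih, add_zero, Nat.add_div_right N hc] at shift
    simp only [Nat.add_right_comm N 1, add_assoc N] at shift ⊢
    omega

theorem sum_range_two_add_div {N m : ℕ} (hN : N = 2 * m + 1) (L : ℕ → ℕ) :
    ∑ j ∈ range 2, L ((N + j) / 2) = L m + L (m + 1) := by
  have half : (N + 0) / 2 = m ∧ (N + 1) / 2 = m + 1 := by omega
  rw [sum_range_succ, sum_range_one, half.1, half.2]

theorem le_tangent_of_antitone_sub {L : ℕ → ℤ} (hL : Antitone fun n ↦ L (n + 1) - L n)
    (s a : ℕ) : L a ≤ L s + (a - s) * (L (s + 1) - L s) := by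
  rcases le_total s a with h | h
  · induction a, h using Nat.le_induction with
    | base => simp
    | succ a hsa ih =>
      have slope := hL hsa
      push_cast at slope ⊢
      linarith
  · induction h using Nat.decreasingInduction with
    | self => simp
    | of_succ a has ih =>
      have slope := hL has.le
      push_cast at slope ih ⊢
      linarith

/-- Jensen's inequality for integer arguments: the terms `(N + j) / #s` for `j < #s` differ by
at most one and add up to `N`. -/
theorem sum_le_sum_range_of_antitone_sub {L : ℕ → ℤ} (hL : Antitone fun n ↦ L (n + 1) - L n)
    {ι : Type*} (s : Finset ι) (a : ι → ℕ) :
    ∑ i ∈ s, L (a i) ≤ ∑ j ∈ range #s, L ((∑ i ∈ s, a i + j) / #s) := by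
  rcases s.eq_empty_or_nonempty with rfl | hs
  · simp
  set N := ∑ i ∈ s, a i with hN
  set q := N / #s
  set δ := L (q + 1) - L q with hδ
  have on_tangent : ∀ j ∈ range #s, L ((N + j) / #s) = L q + (((N + j) / #s : ℕ) - q) * δ := by
    intro j hj
    have near : (N + j) / #s = q ∨ (N + j) / #s = q + 1 := by
      have upper : (N + j) / #s ≤ q + 1 := by
        rw [← Nat.add_div_right N hs.card_pos]
        exact Nat.div_le_div_right (by have := mem_range.1 hj; omega)
      have lower : q ≤ (N + j) / #s := Nat.div_le_div_right (by omega)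
      omega
    rcases near with h | h <;> simp [h, hδ]
  calc ∑ i ∈ s, L (a i)
      ≤ ∑ i ∈ s, (L q + (a i - q) * δ) := sum_le_sum fun i _ ↦ le_tangent_of_antitone_sub hL q _
    _ = ∑ j ∈ range #s, (L q + (((N + j) / #s : ℕ) - q) * δ) := by
        simp only [sum_add_distrib, ← sum_mul, sum_sub_distrib, ← Nat.cast_sum,
          sum_range_add_div N hs.card_pos, ← hN, sum_const, card_range]
    _ = ∑ j ∈ range #s, L ((N + j) / #s) := (sum_congr rfl on_tangent).symm

theorem two_mul_add_le_sum_range_of_antitone_sub {L : ℕ → ℕ}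
    (hL : Antitone fun n ↦ (L (n + 1) : ℤ) - L n) (m : ℕ) {c : ℕ} (hc : 3 ≤ c) :
    2 * L m + L 1 ≤ ∑ j ∈ range c, L ((2 * m + 1 + j) / c) := by
  obtain ⟨c, rfl⟩ := Nat.exists_eq_add_of_le' hc
  let a : ℕ → ℕ
    | 0 | 1 => m
    | 2 => 1
    | _ => 0
  have sum_a : ∑ i ∈ range (c + 3), a i = 2 * m + 1 := by
    simp only [sum_range_succ', a, sum_const_zero]
    omega
  have jensen := sum_le_sum_range_of_antitone_sub (L := fun n ↦ L n) hL (range (c + 3)) a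
  rw [sum_a, card_range] at jensen
  calc 2 * L m + L 1 ≤ ∑ i ∈ range (c + 3), L (a i) := by
        simp only [sum_range_succ', a]
        omega
    _ ≤ ∑ j ∈ range (c + 3), L ((2 * m + 1 + j) / (c + 3)) := by exact_mod_cast jensen

end Concave

section Quotients

variable {k A : Type*} [Field k] [CommRing A] [Algebra k A]

/-- The isomorphism `A / I ≃ B / IB` induced by a surjection `φ : A → B` whose kernel lies in
`I`. -/
noncomputable def quotientAlgEquivQuotientMap {B : Type*} [CommRing B] [Algebra k B]
    {φ : A →ₐ[k] B} (hφ : Function.Surjective φ) {I : Ideal A} (hI : RingHom.ker φ ≤ I) :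
    (A ⧸ I) ≃ₐ[k] B ⧸ I.map φ :=
  have ker_comp : I = RingHom.ker ((Ideal.Quotient.mkₐ k (I.map φ)).comp φ) := by
    rw [← sup_eq_left.2 hI, ← Ideal.comap_map_of_surjective' φ hφ]
    ext x
    simp [RingHom.mem_ker, Ideal.Quotient.eq_zero_iff_mem]
  (Ideal.quotientEquivAlgOfEq k ker_comp).trans
    (Ideal.quotientKerAlgEquivOfSurjective ((Ideal.Quotient.mkₐ_surjective k _).comp hφ))

theorem finrank_map_add_finrank_ker_inf {V W : Type*} [AddCommGroup V] [Module k V]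
    [FiniteDimensional k V] [AddCommGroup W] [Module k W] (T : V →ₗ[k] W) (U : Submodule k V) :
    finrank k (U.map T) + finrank k (LinearMap.ker T ⊓ U : Submodule k V) = finrank k U := by
  rw [← LinearMap.finrank_range_add_finrank_ker (T.domRestrict U), LinearMap.range_domRestrict,
    LinearMap.ker_domRestrict, ← Submodule.finrank_map_subtype_eq, Submodule.map_comap_subtype,
    inf_comm]

theorem antitone_finrank_quotient_pow_succ_sub [Module.Finite k A] (t : A) :
    Antitone fun n ↦ (finrank k (A ⧸ Ideal.span {t ^ (n + 1)}) : ℤ) -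
      finrank k (A ⧸ Ideal.span {t ^ n}) := by
  let T : A →ₗ[k] A := LinearMap.mulLeft k t
  let W (n : ℕ) : Submodule k A := (Ideal.span {t ^ n}).restrictScalars k
  have antitone_W : Antitone W := fun a b hab ↦
    Ideal.span_singleton_le_span_singleton.2 (pow_dvd_pow t hab)
  have map_W (n : ℕ) : (W n).map T = W (n + 1) := by
    ext x
    simp only [W, T, Submodule.mem_map, Submodule.restrictScalars_mem,
      Ideal.mem_span_singleton, LinearMap.mulLeft_apply, dvd_iff_exists_eq_mul_right, pow_succ']
    constructor
    · rintro ⟨_, ⟨c, rfl⟩, rfl⟩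
      exact ⟨c, by ring⟩
    · rintro ⟨c, rfl⟩
      exact ⟨_, ⟨c, rfl⟩, by ring⟩
  have sub_eq (n : ℕ) : (finrank k (A ⧸ Ideal.span {t ^ (n + 1)}) : ℤ) -
      finrank k (A ⧸ Ideal.span {t ^ n}) =
        finrank k (LinearMap.ker T ⊓ W n : Submodule k A) := by
    have quot (n : ℕ) : finrank k (A ⧸ Ideal.span {t ^ n}) + finrank k (W n) = finrank k A :=
      Submodule.finrank_quotient_add_finrank (W n)
    have rank_nullity := finrank_map_add_finrank_ker_inf T (W n)
    rw [map_W] at rank_nullity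
    have := quot n
    have := quot (n + 1)
    omega
  intro a b hab
  simp only [sub_eq, Nat.cast_le]
  exact Submodule.finrank_mono (inf_le_inf_left _ (antitone_W hab))

theorem finrank_quotient_le_add_of_comap_le {k U V W : Type*} [Field k] [AddCommGroup U]
    [Module k U] [FiniteDimensional k U] [AddCommGroup V] [Module k V] [AddCommGroup W]
    [Module k W] (δ : V →ₗ[k] W) (ι : U →ₗ[k] V) {I : Submodule k V} {J : Submodule k W}
    [FiniteDimensional k (V ⧸ I)] [FiniteDimensional k (W ⧸ J)]
    (h : J.comap δ ≤ I ⊔ LinearMap.range ι) :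
    finrank k (V ⧸ I) ≤ finrank k (W ⧸ J) + finrank k U := by
  let S := I ⊔ LinearMap.range ι
  let δ' : V ⧸ J.comap δ →ₗ[k] W ⧸ J := (J.comap δ).mapQ J δ le_rfl
  have hδ' : Function.Injective δ' := by
    rw [← LinearMap.ker_eq_bot, Submodule.ker_mapQ, Submodule.mkQ_map_self]
  have := FiniteDimensional.of_injective δ' hδ'
  have rank_quotient_S : finrank k (V ⧸ S) ≤ finrank k (W ⧸ J) :=
    (LinearMap.finrank_le_finrank_of_surjective (Submodule.factor_surjective h)).trans
      (LinearMap.finrank_le_finrank_of_injective hδ')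
  have rank_map_S : finrank k (S.map I.mkQ) ≤ finrank k U := by
    rw [Submodule.map_sup, Submodule.mkQ_map_self, bot_sup_eq, ← LinearMap.range_comp]
    exact LinearMap.finrank_range_le _
  have rank_add := Submodule.finrank_quotient_add_finrank (S.map I.mkQ)
  rw [(Submodule.quotientQuotientEquivQuotient I S le_sup_left).finrank_eq] at rank_add
  omega

end Quotients

section Univariate

open Polynomial

local notation "X" => Polynomial.X
local notation "C" => Polynomial.C

section Relative

variable {k A : Type*} [Field k] [CommRing A] [Algebra k A]

/-- The Hilbert–Kunz length of `g` relative to the coefficient algebra `A`: only the polynomial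
variable is truncated, at an arbitrary exponent `N`. -/
noncomputable def relHK (k : Type*) {A : Type*} [Field k] [CommRing A] [Algebra k A] (N : ℕ)
    (g : A[X]) : ℕ :=
  finrank k (A[X] ⧸ Ideal.span {(X : A[X]) ^ N, g})

instance finite_quotient_span_X_pow [Module.Finite k A] (N : ℕ) (g : A[X]) :
    Module.Finite k (A[X] ⧸ Ideal.span {(X : A[X]) ^ N, g}) := by
  have := (monic_X_pow (R := A) N).finite_quotient
  have : Module.Finite k (A[X] ⧸ Ideal.span {(X : A[X]) ^ N}) := Module.Finite.trans A _
  have hle : Ideal.span {(X : A[X]) ^ N} ≤ Ideal.span {X ^ N, g} := Ideal.span_mono (by simp)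
  exact Module.Finite.of_surjective (Ideal.Quotient.factorₐ k hle).toLinearMap
    (Ideal.Quotient.factor_surjective hle)

theorem span_neg_pow {R : Type*} [CommRing R] (x : R) (n : ℕ) :
    Ideal.span {(-x) ^ n} = Ideal.span {x ^ n} := by
  rcases n.even_or_odd with h | h <;> simp [h.neg_pow]

theorem relHK_X_add_C (t : A) (N : ℕ) :
    relHK k N (X + C t) = finrank k (A ⧸ Ideal.span {t ^ N}) := by
  let φ : A[X] →ₐ[k] A := (aeval (R := A) (-t)).restrictScalars k
  have hφ : Function.Surjective φ := fun x ↦ ⟨C x, by simp [φ]⟩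
  have ker_φ : RingHom.ker φ = Ideal.span {X + C t} := by
    ext f
    rw [← sub_neg_eq_add, ← Polynomial.C_neg, ← ker_evalRingHom]
    simp [φ, RingHom.mem_ker, Polynomial.coe_aeval_eq_eval]
  have map_φ : (Ideal.span {(X : A[X]) ^ N, X + C t}).map φ = Ideal.span {t ^ N} := by
    rw [Ideal.map_span, Set.image_pair, Set.pair_comm, ← span_neg_pow t]
    simp [φ]
  rw [relHK, (quotientAlgEquivQuotientMap hφ
    (ker_φ.trans_le (Ideal.span_mono (by simp)))).toLinearEquiv.finrank_eq, map_φ]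

theorem relHK_X_add_C_pow_comm (t : A) (a b : ℕ) :
    relHK k a ((X + C t) ^ b) = relHK k b ((X + C t) ^ a) := by
  let φ : A[X] →ₐ[k] A[X] := (aeval (R := A) (-(X + C t) : A[X])).restrictScalars k
  have φ_X : φ X = -(X + C t) := by simp [φ]
  have φ_X_add_C : φ (X + C t) = -X := by simp [φ, Polynomial.algebraMap_eq]
  have φ_comp_φ : φ.comp φ = AlgHom.id k _ := by
    apply Polynomial.algHom_ext'
    · ext c
      simp [φ, Polynomial.algebraMap_eq]
    · simp [φ, Polynomial.algebraMap_eq]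
  have φ_involutive : Function.Involutive φ := DFunLike.congr_fun φ_comp_φ
  have ker_φ : RingHom.ker φ = ⊥ := (RingHom.injective_iff_ker_eq_bot _).1 φ_involutive.injective
  have map_φ : (Ideal.span {(X : A[X]) ^ a, (X + C t) ^ b}).map φ =
      Ideal.span {X ^ b, (X + C t) ^ a} := by
    rw [Ideal.map_span, Set.image_pair, map_pow, map_pow, φ_X, φ_X_add_C, Set.pair_comm,
      Ideal.span_insert, Ideal.span_insert, span_neg_pow, span_neg_pow]
  rw [relHK, (quotientAlgEquivQuotientMap φ_involutive.surjective
    (ker_φ.trans_le bot_le)).toLinearEquiv.finrank_eq, map_φ, relHK]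

end Relative

section Expand

variable {k A : Type*} [Field k] [CommRing A] [Algebra k A] {c : ℕ}

/-- The polynomial whose monomials with exponent congruent to `i` modulo `c` are given by `F i`. -/
noncomputable def residueSum (A : Type*) [CommRing A] (c : ℕ) : (Fin c → A[X]) →ₗ[A] A[X] :=
  LinearMap.lsum A _ A fun i ↦ LinearMap.mulLeft A (X ^ (i : ℕ)) ∘ₗ (expand A c).toLinearMap

theorem residueSum_apply (F : Fin c → A[X]) :
    residueSum A c F = ∑ i : Fin c, X ^ (i : ℕ) * expand A c (F i) := by
  simp [residueSum, LinearMap.lsum_apply]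

theorem residueSum_mul (F : Fin c → A[X]) (g : A[X]) :
    residueSum A c (fun i ↦ F i * g) = residueSum A c F * expand A c g := by
  simp only [residueSum_apply, map_mul, sum_mul, mul_assoc]

theorem coeff_residueSum (F : Fin c → A[X]) (n : ℕ) (j : Fin c) :
    (residueSum A c F).coeff (c * n + j) = (F j).coeff n := by
  rw [residueSum_apply, finsetSum_coeff, sum_eq_single_of_mem j (mem_univ j)]
  · rw [coeff_X_pow_mul, mul_comm, coeff_expand_mul j.pos]
  · intro i _ hij
    rw [coeff_X_pow_mul', coeff_expand j.pos]
    split_ifs with hi hdvd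
    · have hmod : c * n + j ≡ i [MOD c] := ((Nat.modEq_iff_dvd' hi).2 hdvd).symm
      rw [Nat.ModEq, Nat.mul_add_mod, Nat.mod_eq_of_lt i.2, Nat.mod_eq_of_lt j.2] at hmod
      exact absurd (Fin.ext hmod.symm) hij
    all_goals rfl

theorem residueSum_injective : Function.Injective (residueSum A c) := by
  intro F G h
  ext j n
  rw [← coeff_residueSum, h, coeff_residueSum]

theorem residueSum_surjective (hc : 0 < c) : Function.Surjective (residueSum A c) := by
  rw [← LinearMap.range_eq_top, eq_top_iff]
  rintro f -
  induction f using Polynomial.induction_on' with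
  | add f g hf hg => exact add_mem hf hg
  | monomial n a =>
    refine ⟨Pi.single ⟨n % c, Nat.mod_lt n hc⟩ (monomial (n / c) a), ?_⟩
    rw [residueSum, LinearMap.lsum_piSingle]
    simp [X_pow_mul_monomial, mul_comm (n / c), Nat.div_add_mod]

theorem X_pow_dvd_residueSum_iff {F : Fin c → A[X]} {N : ℕ} :
    X ^ N ∣ residueSum A c F ↔ ∀ i, X ^ ((N + i.rev) / c) ∣ F i := by
  have lt_iff (i : Fin c) (n : ℕ) : n < (N + i.rev) / c ↔ c * n + i < N := by
    rw [← Nat.add_one_le_iff, Nat.le_div_iff_mul_le i.pos, Fin.val_rev, add_one_mul, mul_comm n]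
    omega
  simp only [X_pow_dvd_iff, lt_iff]
  refine ⟨fun h i n hn ↦ coeff_residueSum F n i ▸ h _ hn, fun h m hm ↦ ?_⟩
  rcases c.eq_zero_or_pos with rfl | hc
  · simp [residueSum_apply]
  · rw [← Nat.div_add_mod m c] at hm ⊢
    exact (coeff_residueSum F (m / c) ⟨m % c, Nat.mod_lt m hc⟩).trans (h _ _ hm)

theorem residueSum_mem_span_iff (hc : 0 < c) {F : Fin c → A[X]} {N : ℕ} {g : A[X]} :
    residueSum A c F ∈ Ideal.span {X ^ N, expand A c g} ↔
      ∀ i, F i ∈ Ideal.span {X ^ ((N + i.rev) / c), g} := by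
  simp only [Ideal.mem_span_pair]
  constructor
  · rintro ⟨a, b, hab⟩ i
    obtain ⟨H, hH⟩ := residueSum_surjective hc (a * X ^ N)
    obtain ⟨G, rfl⟩ := residueSum_surjective hc b
    have F_eq : F = H + fun i ↦ G i * g := residueSum_injective <| by
      rw [map_add, residueSum_mul, hH, hab]
    obtain ⟨a', ha'⟩ := X_pow_dvd_residueSum_iff.1 (hH ▸ dvd_mul_left (X ^ N) a) i
    exact ⟨a', G i, by simp [F_eq, ha', mul_comm a']⟩
  · intro h
    choose a b hab using h
    obtain ⟨a', ha'⟩ := X_pow_dvd_residueSum_iff.2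
      fun i ↦ dvd_mul_left (X ^ ((N + i.rev) / c)) (a i)
    refine ⟨a', residueSum A c b, ?_⟩
    rw [mul_comm a', ← ha', ← residueSum_mul, ← map_add]
    exact congrArg _ (funext hab)

theorem relHK_expand [Module.Finite k A] (hc : 0 < c) (N : ℕ) (g : A[X]) :
    relHK k N (expand A c g) = ∑ j ∈ range c, relHK k ((N + j) / c) g := by
  let I : Ideal A[X] := Ideal.span {X ^ N, expand A c g}
  let J (i : Fin c) : Ideal A[X] := Ideal.span {X ^ ((N + i.rev) / c), g}
  let ψ : (Fin c → A[X]) →ₗ[k] A[X] ⧸ I :=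
    (Ideal.Quotient.mkₐ k I).toLinearMap ∘ₗ (residueSum A c).restrictScalars k
  have hψ : Function.Surjective ψ :=
    (Ideal.Quotient.mkₐ_surjective k I).comp (residueSum_surjective hc)
  have ker_ψ : LinearMap.ker ψ = Submodule.pi Set.univ fun i ↦ (J i).restrictScalars k := by
    ext F
    simp [ψ, I, J, Ideal.Quotient.eq_zero_iff_mem, residueSum_mem_span_iff hc, Submodule.mem_pi]
  calc relHK k N (expand A c g)
      = finrank k (∀ i, A[X] ⧸ (J i).restrictScalars k) := by
        rw [relHK, ← (ψ.quotKerEquivOfSurjective hψ).finrank_eq, ker_ψ,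
          (Submodule.quotientPi _).finrank_eq]
    _ = ∑ i : Fin c, relHK k ((N + i.rev) / c) g :=
        finrank_pi_fintype k (M := fun i : Fin c ↦ A[X] ⧸ Ideal.span {X ^ ((N + i.rev) / c), g})
    _ = ∑ j ∈ range c, relHK k ((N + j) / c) g := by
        rw [← Fin.sum_univ_eq_sum_range (fun j ↦ relHK k ((N + j) / c) g)]
        exact Equiv.sum_comp Fin.revPerm fun i : Fin c ↦ relHK k ((N + i) / c) g

theorem relHK_zero [Module.Finite k A] {N : ℕ} (hN : 0 < N) :
    relHK k N (0 : A[X]) = N * finrank k A := by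
  have div_eq_one : ∀ j ∈ range N, (N + j) / N = 1 := fun j hj ↦ by
    rw [Nat.add_div_left j hN, Nat.div_eq_of_lt (mem_range.1 hj)]
  have span_eq : Ideal.span {X ^ N, (0 : A[X])} = Ideal.span {X ^ N, expand A N (X + C 0)} := by
    rw [Polynomial.C_0, add_zero, Polynomial.expand_X, Set.pair_eq_singleton, Set.pair_comm,
      Ideal.span_insert_zero]
  calc relHK k N (0 : A[X]) = relHK k N (expand A N (X + C 0)) := by rw [relHK, span_eq, relHK]
    _ = ∑ j ∈ range N, relHK k 1 (X + C (0 : A)) := by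
        rw [relHK_expand hN]
        exact sum_congr rfl fun j hj ↦ by rw [div_eq_one j hj]
    _ = N * finrank k A := by
        rw [sum_const, card_range, smul_eq_mul, relHK_X_add_C, pow_one, Ideal.span_singleton_zero,
          (AlgEquiv.quotientBot k A).toLinearEquiv.finrank_eq]

end Expand

section Derivative

open scoped Nat

variable {A : Type*} [CommRing A]

theorem isUnit_natCast_succ_of_isUnit_factorial {N n : ℕ} (hN : IsUnit (N ! : A)) (hn : n < N) :
    IsUnit ((n + 1 : ℕ) : A) :=
  isUnit_of_dvd_unit (Nat.cast_dvd_cast (Nat.dvd_factorial n.succ_pos hn)) hN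

theorem eq_C_of_derivative_eq_zero_of_natDegree_le {N : ℕ} (hN : IsUnit (N ! : A)) {f : A[X]}
    (hf : f.natDegree ≤ N) (hf' : derivative f = 0) : f = C (f.coeff 0) := by
  ext n
  rcases n with _ | n
  · simp
  rw [coeff_C_succ]
  rcases lt_or_ge n N with hn | hn
  · have hcoeff : f.coeff (n + 1) * ((n + 1 : ℕ) : A) = 0 := by
      simpa [coeff_derivative] using congrArg (Polynomial.coeff · n) hf'
    exact (isUnit_natCast_succ_of_isUnit_factorial hN hn).mul_left_eq_zero.1 hcoeff
  · exact coeff_eq_zero_of_natDegree_lt (by omega)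

theorem exists_derivative_eq_of_X_pow_dvd {N : ℕ} (hN : IsUnit (N ! : A)) {g : A[X]}
    (hg : g.degree < N) {m : ℕ} (hm : X ^ m ∣ g) :
    ∃ G : A[X], G.natDegree ≤ N ∧ X ^ (m + 1) ∣ G ∧ derivative G = g := by
  let G : A[X] := ∑ i ∈ range N, monomial (i + 1) (g.coeff i * Ring.inverse ((i + 1 : ℕ) : A))
  refine ⟨G, natDegree_sum_le_of_forall_le _ _ fun i hi ↦ ?_, dvd_sum fun i _ ↦ ?_, ?_⟩
  · exact (natDegree_monomial_le _).trans (mem_range.1 hi)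
  · rcases lt_or_ge i m with hi | hi
    · simp [X_pow_dvd_iff.1 hm i hi]
    · rw [← Polynomial.C_mul_X_pow_eq_monomial]
      exact (pow_dvd_pow X (by omega)).mul_left _
  · have derivative_term : ∀ i ∈ range N, derivative (monomial (i + 1)
        (g.coeff i * Ring.inverse ((i + 1 : ℕ) : A))) = monomial i (g.coeff i) := by
      intro i hi
      rw [derivative_monomial, add_tsub_cancel_right, mul_assoc, Ring.inverse_mul_cancel _
        (isUnit_natCast_succ_of_isUnit_factorial hN (mem_range.1 hi)), mul_one]
    rw [derivative_sum, sum_congr rfl derivative_term]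
    ext n
    simp only [finsetSum_coeff, Polynomial.coeff_monomial, sum_ite_eq', mem_range,
      ite_eq_left_iff, not_lt]
    exact fun hn ↦ ((degree_lt_iff_coeff_zero g N).1 hg n hn).symm

theorem derivative_taylor (t : A) (f : A[X]) :
    derivative (taylor t f) = taylor t (derivative f) := by
  simp [taylor_apply, derivative_comp]

theorem exists_derivative_eq_of_X_add_C_pow_dvd {N : ℕ} (hN : IsUnit (N ! : A)) {g : A[X]}
    (hg : g.degree < N) {t : A} {m : ℕ} (hm : (X + C t) ^ m ∣ g) :
    ∃ G : A[X], G.natDegree ≤ N ∧ (X + C t) ^ (m + 1) ∣ G ∧ derivative G = g := by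
  have hm' : X ^ m ∣ taylor (-t) g := by
    simpa [taylor_pow] using map_dvd (taylorAlgHom (-t)) hm
  obtain ⟨G, G_natDegree, G_dvd, hG⟩ :=
    exists_derivative_eq_of_X_pow_dvd hN ((degree_taylor g (-t)).trans_lt hg) hm'
  refine ⟨taylor t G, (natDegree_taylor G t).trans_le G_natDegree, ?_, ?_⟩
  · simpa [taylor_pow] using map_dvd (taylorAlgHom t) G_dvd
  · rw [derivative_taylor, hG, taylor_taylor, add_neg_cancel, taylor_zero]

theorem exists_add_eq_of_mem_span_pair {u v f : A[X]} (hu : u ≠ 0) (hv : v.Monic)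
    (hf : f ∈ Ideal.span {u, v}) (hdeg : f.degree < u.degree + v.degree) :
    ∃ g h : A[X], u ∣ g ∧ v ∣ h ∧ g.degree < u.degree + v.degree ∧
      h.degree < u.degree + v.degree ∧ g + h = f := by
  have := Polynomial.nontrivial_iff.1 (nontrivial_of_ne u 0 hu)
  obtain ⟨a, b, rfl⟩ := Ideal.mem_span_pair.1 hf
  have g_degree : (u * (a %ₘ v)).degree < u.degree + v.degree :=
    (degree_mul_le _ _).trans_lt
      (WithBot.add_lt_add_left (degree_ne_bot.2 hu) (degree_modByMonic_lt a hv))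
  refine ⟨u * (a %ₘ v), a * u + b * v - u * (a %ₘ v), dvd_mul_right _ _, ⟨a /ₘ v * u + b, ?_⟩,
    g_degree, (degree_sub_le _ _).trans_lt (max_lt hdeg g_degree), by ring⟩
  linear_combination -u * modByMonic_add_div a v

theorem sub_C_mem_span_of_derivative_mem_of_natDegree_le {a b : ℕ} (hN : IsUnit ((a + b)! : A))
    {t : A} {f : A[X]} (hf : f.natDegree ≤ a + b)
    (hf' : derivative f ∈ Ideal.span {X ^ a, (X + C t) ^ b}) :
    ∃ c, f - C c ∈ Ideal.span {X ^ (a + 1), (X + C t) ^ (b + 1)} := by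
  nontriviality A
  have degree_add : (X ^ a : A[X]).degree + ((X + C t) ^ b).degree = (a + b : ℕ) := by
    rw [degree_X_pow, degree_pow' (by simp), degree_X_add_C, nsmul_one, Nat.cast_add]
  have derivative_degree : (derivative f).degree < (a + b : ℕ) :=
    (degree_lt_iff_coeff_zero _ _).2 fun n hn ↦ by
      rw [coeff_derivative, coeff_eq_zero_of_natDegree_lt (by omega), zero_mul]
  obtain ⟨g, h, g_dvd, h_dvd, g_degree, h_degree, hgh⟩ := exists_add_eq_of_mem_span_pair
    (monic_X_pow a).ne_zero ((monic_X_add_C t).pow b) hf' (degree_add ▸ derivative_degree)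
  rw [degree_add] at g_degree h_degree
  obtain ⟨G, G_natDegree, G_dvd, hG⟩ := exists_derivative_eq_of_X_pow_dvd hN g_degree g_dvd
  obtain ⟨H, H_natDegree, H_dvd, hH⟩ := exists_derivative_eq_of_X_add_C_pow_dvd hN h_degree h_dvd
  have f_sub_natDegree : (f - (G + H)).natDegree ≤ a + b :=
    (natDegree_sub_le_iff_left (natDegree_add_le_of_degree_le G_natDegree H_natDegree)).2 hf
  have f_sub_eq_C :=
    eq_C_of_derivative_eq_zero_of_natDegree_le hN f_sub_natDegree (by simp [hG, hH, hgh])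
  refine ⟨_, (?_ : f - C ((f - (G + H)).coeff 0) ∈ _)⟩
  rw [← f_sub_eq_C, sub_sub_cancel]
  exact add_mem (Ideal.mem_of_dvd _ G_dvd (Ideal.subset_span (by simp)))
    (Ideal.mem_of_dvd _ H_dvd (Ideal.subset_span (by simp)))

theorem sub_C_mem_span_of_derivative_mem {a b : ℕ} (hN : IsUnit ((a + b)! : A)) {t : A} {f : A[X]}
    (hf' : derivative f ∈ Ideal.span {X ^ a, (X + C t) ^ b}) :
    ∃ c, f - C c ∈ Ideal.span {X ^ (a + 1), (X + C t) ^ (b + 1)} := by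
  nontriviality A
  set r := f %ₘ X ^ (a + 1)
  set q := f /ₘ X ^ (a + 1)
  have f_eq : r + X ^ (a + 1) * q = f := modByMonic_add_div f _
  have r_natDegree : r.natDegree ≤ a + b := by
    have ne_one : (X ^ (a + 1) : A[X]) ≠ 1 := fun h ↦ by simpa using congrArg natDegree h
    have r_lt := natDegree_modByMonic_lt f (monic_X_pow (a + 1)) ne_one
    rw [natDegree_X_pow] at r_lt
    exact (Nat.le_of_lt_succ r_lt).trans (Nat.le_add_right a b)
  have r_derivative : derivative r ∈ Ideal.span {X ^ a, (X + C t) ^ b} := by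
    have dvd : X ^ a ∣ derivative (X ^ (a + 1) * q) := by
      rw [derivative_mul, derivative_X_pow, add_tsub_cancel_right]
      exact dvd_add ((dvd_mul_left _ _).mul_right _) ((pow_dvd_pow X a.le_succ).mul_right _)
    rw [← f_eq, derivative_add] at hf'
    exact (Ideal.add_mem_iff_left _ (Ideal.mem_of_dvd _ dvd (Ideal.subset_span (by simp)))).1 hf'
  obtain ⟨c, hc⟩ := sub_C_mem_span_of_derivative_mem_of_natDegree_le hN r_natDegree r_derivative
  refine ⟨c, ?_⟩
  rw [← f_eq, add_sub_right_comm]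
  exact add_mem hc (Ideal.mul_mem_right _ _ (Ideal.subset_span (by simp)))

theorem relHK_succ_X_add_C_pow_succ_le {k : Type*} [Field k] [Algebra k A] [Module.Finite k A]
    {a b : ℕ} (hN : IsUnit ((a + b)! : A)) (t : A) :
    relHK k (a + 1) ((X + C t) ^ (b + 1)) ≤ relHK k a ((X + C t) ^ b) + finrank k A := by
  let I (a b : ℕ) : Ideal A[X] := Ideal.span {X ^ a, (X + C t) ^ b}
  have (a b : ℕ) : Module.Finite k (A[X] ⧸ (I a b).restrictScalars k) :=
    finite_quotient_span_X_pow a ((X + C t) ^ b)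
  refine finrank_quotient_le_add_of_comap_le (derivative.restrictScalars k)
    (CAlgHom (R := k) (A := A)).toLinearMap (I := (I (a + 1) (b + 1)).restrictScalars k)
    (J := (I a b).restrictScalars k) fun f hf ↦ ?_
  obtain ⟨c, hc⟩ := sub_C_mem_span_of_derivative_mem hN hf
  exact Submodule.mem_sup.2 ⟨f - C c, hc, C c, ⟨c, rfl⟩, sub_add_cancel f _⟩

end Derivative

end Univariate

section Truncated

variable (k : Type*) [Field k] (n N : ℕ)

/-- The ideal generated by the `N`-th powers of the variables. -/
noncomputable def truncIdeal : Ideal (MvPolynomial (Fin n) k) :=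
  Ideal.span (Set.range fun i ↦ X i ^ N)

/-- The truncated polynomial algebra `k[x₀, …, xₙ₋₁] / (x₀ ^ N, …, xₙ₋₁ ^ N)`. -/
def TruncRing : Type _ := MvPolynomial (Fin n) k ⧸ truncIdeal k n N

noncomputable instance : CommRing (TruncRing k n N) :=
  inferInstanceAs (CommRing (MvPolynomial (Fin n) k ⧸ truncIdeal k n N))

noncomputable instance : Algebra k (TruncRing k n N) :=
  inferInstanceAs (Algebra k (MvPolynomial (Fin n) k ⧸ truncIdeal k n N))

/-- The quotient map onto the truncated polynomial algebra. -/
noncomputable def truncMk : MvPolynomial (Fin n) k →ₐ[k] TruncRing k n N :=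
  Ideal.Quotient.mkₐ k (truncIdeal k n N)

/-- The isomorphism `k[x₀, …, xₙ] ≃ k[x₀, …, xₙ₋₁][xₙ]`. -/
noncomputable def lastVarEquiv :
    MvPolynomial (Fin (n + 1)) k ≃ₐ[k] Polynomial (MvPolynomial (Fin n) k) :=
  (renameEquiv k finSuccEquivLast).trans (optionEquivLeft k (Fin n))

/-- Truncation of all variables but the last one. -/
noncomputable def truncInit : MvPolynomial (Fin (n + 1)) k →ₐ[k] Polynomial (TruncRing k n N) :=
  (Polynomial.mapAlgHom (truncMk k n N)).comp (lastVarEquiv k n).toAlgHom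

variable {k n N}

theorem truncMk_surjective : Function.Surjective (truncMk k n N) :=
  Ideal.Quotient.mkₐ_surjective k _

theorem ker_truncMk : RingHom.ker (truncMk k n N) = truncIdeal k n N :=
  Ideal.Quotient.mkₐ_ker k _

theorem X_pow_mem_truncIdeal (i : Fin n) : X i ^ N ∈ truncIdeal k n N :=
  Ideal.subset_span ⟨i, rfl⟩

theorem lastVarEquiv_X_last : lastVarEquiv k n (X (Fin.last n)) = Polynomial.X := by
  simp [lastVarEquiv]

theorem lastVarEquiv_rename_castSucc (f : MvPolynomial (Fin n) k) :
    lastVarEquiv k n (rename Fin.castSucc f) = Polynomial.C f := by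
  have h : (lastVarEquiv k n).toAlgHom.comp (rename Fin.castSucc) = Polynomial.CAlgHom := by
    apply MvPolynomial.algHom_ext
    simp [lastVarEquiv]
  exact DFunLike.congr_fun h f

theorem truncInit_X_last : truncInit k n N (X (Fin.last n)) = Polynomial.X := by
  simp [truncInit, lastVarEquiv_X_last]

theorem truncInit_rename_castSucc (f : MvPolynomial (Fin n) k) :
    truncInit k n N (rename Fin.castSucc f) = Polynomial.C (truncMk k n N f) := by
  simp [truncInit, lastVarEquiv_rename_castSucc]

theorem truncInit_surjective : Function.Surjective (truncInit k n N) :=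
  (Polynomial.map_surjective _ truncMk_surjective).comp (lastVarEquiv k n).surjective

theorem map_C_truncIdeal_le :
    (truncIdeal k n N).map Polynomial.C ≤
      (truncIdeal k (n + 1) N).comap (lastVarEquiv k n).symm := by
  rw [truncIdeal, Ideal.map_span, Ideal.span_le]
  rintro _ ⟨_, ⟨i, rfl⟩, rfl⟩
  rw [← lastVarEquiv_rename_castSucc, SetLike.mem_coe, Ideal.mem_comap,
    AlgEquiv.symm_apply_apply, map_pow, rename_X]
  exact X_pow_mem_truncIdeal i.castSucc

theorem ker_truncInit_le : RingHom.ker (truncInit k n N) ≤ truncIdeal k (n + 1) N := by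
  intro x hx
  have mem_map_C : lastVarEquiv k n x ∈ (truncIdeal k n N).map Polynomial.C := by
    rw [← ker_truncMk, ← RingHom.ker_coe_toRingHom, ← Polynomial.ker_mapRingHom]
    exact hx
  simpa using map_C_truncIdeal_le mem_map_C

theorem map_truncInit_truncIdeal :
    (truncIdeal k (n + 1) N).map (truncInit k n N) = Ideal.span {Polynomial.X ^ N, 0} := by
  rw [truncIdeal, Ideal.map_span]
  apply le_antisymm <;> rw [Ideal.span_le]
  · rintro _ ⟨_, ⟨i, rfl⟩, rfl⟩
    induction i using Fin.lastCases with
    | last => exact Ideal.subset_span (by simp [truncInit_X_last])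
    | cast i =>
      have truncMk_X_pow : truncMk k n N (X i ^ N) = 0 :=
        RingHom.mem_ker.1 (ker_truncMk.ge (X_pow_mem_truncIdeal i))
      exact Ideal.subset_span (by
        simp [← rename_X, ← map_pow, truncInit_rename_castSucc, truncMk_X_pow])
  · rintro _ (rfl | rfl)
    · exact Ideal.subset_span ⟨_, ⟨Fin.last n, rfl⟩, by simp [truncInit_X_last]⟩
    · exact zero_mem _

/-- `k[x₀, …, xₙ] / (x₀ ^ N, …, xₙ ^ N)` as a truncated polynomial ring in `xₙ` over
`k[x₀, …, xₙ₋₁] / (x₀ ^ N, …, xₙ₋₁ ^ N)`, in the shape used by `relHK`. -/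
noncomputable def truncRingSuccEquiv : TruncRing k (n + 1) N ≃ₐ[k]
    Polynomial (TruncRing k n N) ⧸
      Ideal.span {(Polynomial.X : Polynomial (TruncRing k n N)) ^ N, 0} :=
  (quotientAlgEquivQuotientMap truncInit_surjective ker_truncInit_le).trans
    (Ideal.quotientEquivAlgOfEq k map_truncInit_truncIdeal)

theorem truncMk_bijective_of_zero_vars : Function.Bijective (truncMk k 0 N) := by
  refine ⟨?_, truncMk_surjective⟩
  rw [injective_iff_map_eq_zero]
  intro x hx
  simpa [truncIdeal] using ker_truncMk.le hx

/-- The truncated polynomial algebra in no variables is the base field. -/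
noncomputable def truncRingZeroEquiv : TruncRing k 0 N ≃ₐ[k] k :=
  (AlgEquiv.ofBijective (truncMk k 0 N) truncMk_bijective_of_zero_vars).symm.trans
    (isEmptyAlgEquiv k (Fin 0))

instance finite_truncRing : Module.Finite k (TruncRing k n N) := by
  induction n with
  | zero => exact Module.Finite.equiv truncRingZeroEquiv.symm.toLinearEquiv
  | succ n ih => exact Module.Finite.equiv truncRingSuccEquiv.symm.toLinearEquiv

theorem finrank_truncRing (hN : 0 < N) : finrank k (TruncRing k n N) = N ^ n := by
  induction n with
  | zero => rw [truncRingZeroEquiv.toLinearEquiv.finrank_eq, finrank_self, pow_zero]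
  | succ n ih =>
    rw [truncRingSuccEquiv.toLinearEquiv.finrank_eq, pow_succ', ← ih, ← relHK_zero hN, relHK]

end Truncated

section HilbertKunz

variable {k : Type*} [Field k] {n : ℕ} (p e : ℕ)

theorem HKfun_eq_finrank_quotient_map {B : Type*} [CommRing B] [Algebra k B]
    (f : MvPolynomial (Fin n) k) {φ : MvPolynomial (Fin n) k →ₐ[k] B}
    (hφ : Function.Surjective φ) (ker_φ : RingHom.ker φ ≤ truncIdeal k n (p ^ e)) :
    HKfun k n p e f = finrank k (B ⧸ (truncIdeal k n (p ^ e)).map φ ⊔ Ideal.span {φ f}) := by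
  have hker := ker_φ.trans (le_sup_left (b := Ideal.span {f}))
  have map_sup : (truncIdeal k n (p ^ e) ⊔ Ideal.span {f}).map φ =
      (truncIdeal k n (p ^ e)).map φ ⊔ Ideal.span {φ f} := by
    rw [Ideal.map_sup, Ideal.map_span, Set.image_singleton]
  rw [HKfun, Ideal.span_union, ← truncIdeal, ← map_sup,
    (quotientAlgEquivQuotientMap hφ hker).toLinearEquiv.finrank_eq]

theorem HKfun_pow (f : MvPolynomial (Fin n) k) (a : ℕ) :
    HKfun k n p e (f ^ a) =
      finrank k (TruncRing k n (p ^ e) ⧸ Ideal.span {truncMk k n (p ^ e) f ^ a}) := by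
  have map_truncMk : (truncIdeal k n (p ^ e)).map (truncMk k n (p ^ e)) = ⊥ :=
    (Ideal.map_eq_bot_iff_le_ker _).2 ker_truncMk.ge
  rw [HKfun_eq_finrank_quotient_map p e (f ^ a) truncMk_surjective ker_truncMk.le,
    map_truncMk, bot_sup_eq, map_pow]

theorem HKfun_eq_relHK (f : MvPolynomial (Fin (n + 1)) k) :
    HKfun k (n + 1) p e f = relHK k (p ^ e) (truncInit k n (p ^ e) f) := by
  have span_eq : Ideal.span {Polynomial.X ^ p ^ e, 0} ⊔ Ideal.span {truncInit k n (p ^ e) f} =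
      Ideal.span {Polynomial.X ^ p ^ e, truncInit k n (p ^ e) f} := by
    rw [Set.pair_comm, Ideal.span_insert_zero, ← Ideal.span_insert]
  rw [HKfun_eq_finrank_quotient_map p e f truncInit_surjective ker_truncInit_le,
    map_truncInit_truncIdeal, span_eq, relHK]

theorem antitone_HKfun_pow_succ_sub (f : MvPolynomial (Fin n) k) :
    Antitone fun a ↦ (HKfun k n p e (f ^ (a + 1)) : ℤ) - HKfun k n p e (f ^ a) := by
  simp only [HKfun_pow]
  exact antitone_finrank_quotient_pow_succ_sub _

/-- The polynomial `f + y ^ c`, where `y` is a new last variable. -/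
noncomputable def addLastPow (f : MvPolynomial (Fin n) k) (c : ℕ) :
    MvPolynomial (Fin (n + 1)) k :=
  rename Fin.castSucc f + X (Fin.last n) ^ c

theorem truncInit_addLastPow (f : MvPolynomial (Fin n) k) (c N : ℕ) :
    truncInit k n N (addLastPow f c) = Polynomial.expand _ c
      (Polynomial.X + Polynomial.C (truncMk k n N f)) := by
  simp [addLastPow, truncInit_rename_castSucc, truncInit_X_last, add_comm]

theorem HKfun_addLastPow_pow (f : MvPolynomial (Fin n) k) {c : ℕ} (hc : 0 < c) (a : ℕ) :
    HKfun k (n + 1) p e (addLastPow f c ^ a) = ∑ j ∈ range c, relHK k ((p ^ e + j) / c)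
      ((Polynomial.X + Polynomial.C (truncMk k n (p ^ e) f)) ^ a) := by
  rw [HKfun_eq_relHK, map_pow, truncInit_addLastPow, ← map_pow, relHK_expand hc]

theorem HKfun_addLastPow (f : MvPolynomial (Fin n) k) {c : ℕ} (hc : 0 < c) :
    HKfun k (n + 1) p e (addLastPow f c) =
      ∑ j ∈ range c, HKfun k n p e (f ^ ((p ^ e + j) / c)) := by
  rw [← pow_one (addLastPow f c), HKfun_addLastPow_pow p e f hc]
  simp only [pow_one, relHK_X_add_C, HKfun_pow]

theorem HKfun_one_addLastPow_two_pow_succ_le {m : ℕ} (hp : p = 2 * m + 1) [CharP k p]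
    (f : MvPolynomial (Fin n) k) :
    HKfun k (n + 1) p 1 (addLastPow f 2 ^ (m + 1)) ≤
      HKfun k (n + 1) p 1 (addLastPow f 2 ^ m) + p ^ n := by
  have : Fact p.Prime := ⟨(CharP.char_is_prime_or_zero k p).resolve_right (by omega)⟩
  have isUnit_factorial : IsUnit ((m + m).factorial : TruncRing k n (p ^ 1)) := by
    rw [← map_natCast (algebraMap k _)]
    exact ((IsUnit.natCast_factorial_iff_of_charP p).2 (by omega)).map _
  let t := truncMk k n (p ^ 1) f
  have diagonal := relHK_succ_X_add_C_pow_succ_le (k := k) isUnit_factorial t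
  have finrank_eq : finrank k (TruncRing k n (p ^ 1)) = p ^ n := by
    rw [pow_one, finrank_truncRing (by omega)]
  have off_diagonal := relHK_X_add_C_pow_comm (k := k) t m (m + 1)
  have split (a : ℕ) : HKfun k (n + 1) p 1 (addLastPow f 2 ^ a) =
      relHK k m ((Polynomial.X + Polynomial.C t) ^ a) +
        relHK k (m + 1) ((Polynomial.X + Polynomial.C t) ^ a) := by
    rw [HKfun_addLastPow_pow p 1 f two_pos]
    exact sum_range_two_add_div ((pow_one p).trans hp)
      fun N ↦ relHK k N ((Polynomial.X + Polynomial.C t) ^ a)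
  rw [split, split]
  omega

theorem HK1_A2_sub_A1_general {p : ℕ} (hp : Odd p) [CharP k p] {c : ℕ} (hc : 3 ≤ c)
    (f : MvPolynomial (Fin n) k) :
    HKfun k (n + 2) p 1 (addLastPow (addLastPow f 2) c) + p ^ n ≥
      HKfun k (n + 2) p 1 (addLastPow (addLastPow f 2) 2) +
        HKfun k (n + 1) p 1 (addLastPow f 2) := by
  obtain ⟨m, hm⟩ := hp
  set g := addLastPow f 2
  have split (c : ℕ) (hc : 0 < c) : HKfun k (n + 2) p 1 (addLastPow g c) =
      ∑ j ∈ range c, HKfun k (n + 1) p 1 (g ^ ((2 * m + 1 + j) / c)) := by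
    rw [HKfun_addLastPow p 1 g hc, pow_one, ← hm]
  have split_two : HKfun k (n + 2) p 1 (addLastPow g 2) =
      HKfun k (n + 1) p 1 (g ^ m) + HKfun k (n + 1) p 1 (g ^ (m + 1)) := by
    rw [split 2 two_pos]
    exact sum_range_two_add_div rfl fun a ↦ HKfun k (n + 1) p 1 (g ^ a)
  have jensen : 2 * HKfun k (n + 1) p 1 (g ^ m) + HKfun k (n + 1) p 1 g ≤
      HKfun k (n + 2) p 1 (addLastPow g c) := by
    rw [split c (by omega)]
    simpa using two_mul_add_le_sum_range_of_antitone_sub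
      (L := fun a ↦ HKfun k (n + 1) p 1 (g ^ a)) (antitone_HKfun_pow_succ_sub p 1 g) m hc
  have step : HKfun k (n + 1) p 1 (g ^ (m + 1)) ≤ HKfun k (n + 1) p 1 (g ^ m) + p ^ n :=
    HKfun_one_addLastPow_two_pow_succ_le p hm f
  omega

theorem addLastPow_sum_sq (c : ℕ) :
    addLastPow (∑ i : Fin n, X i ^ 2 : MvPolynomial (Fin n) k) c =
      ∑ i : Fin n, X i.castSucc ^ 2 + X (Fin.last n) ^ c := by
  simp [addLastPow]

theorem addLastPow_sum_sq_two :
    addLastPow (∑ i : Fin n, X i ^ 2 : MvPolynomial (Fin n) k) 2 = ∑ i, X i ^ 2 := by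
  rw [addLastPow_sum_sq, Fin.sum_univ_castSucc]

end HilbertKunz

/-- For every prime `p > 3` and `d ≥ 2`,
`HK_1(S_{p,d}) − HK_1(R_{p,d}) ≥ HK_1(R_{p,d−1}) − p^{d−1}`, i.e.
`HK_1(S_{p,d}) + p^{d−1} ≥ HK_1(R_{p,d}) + HK_1(R_{p,d−1})`. -/
theorem HK1_A2_sub_A1 (p : ℕ) (hp : p.Prime) (hp3 : 3 < p)
    (k : Type*) [Field k] [CharP k p] (d : ℕ) (hd : 2 ≤ d) :
    HKfun k (d + 1) p 1
        ((∑ i : Fin d, (X (i.castSucc) : MvPolynomial (Fin (d + 1)) k) ^ 2) +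
          X (Fin.last d) ^ 3) + p ^ (d - 1) ≥
      HKfun k (d + 1) p 1 (∑ i : Fin (d + 1), X i ^ 2) +
        HKfun k d p 1 (∑ i : Fin d, X i ^ 2) := by
  obtain ⟨n, rfl⟩ := Nat.exists_eq_add_of_le' (show 1 ≤ d by omega)
  have general := HK1_A2_sub_A1_general (hp.odd_of_ne_two (by omega)) le_rfl
    (∑ i : Fin n, X i ^ 2 : MvPolynomial (Fin n) k)
  rwa [addLastPow_sum_sq_two, addLastPow_sum_sq_two, addLastPow_sum_sq] at general
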